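/- Let n ≥ 1, K > 0, J ∈ ℝ, and let X = (X₁,…,X_n) be distributed according to P_{n,K,J}. For each i ∈ {1,…,n}, let m_i(X) = (1/n)·Σ_{j≠i} X_j. Then almost surely, the conditional expectation of X_i given the σ-algebra generated by (X_j)_{j≠i} equals tanh( J·m_i(X) + K·m_i(X)² + K/(3n²) ). -/

import Mathlib

/-!
The weight of a configuration `x` factors as `exp (A + x_i θ)`, where
`θ = J m_i + K m_i² + K / (3 n²)` and `A` depends only on the other spins. Given those spins,
`X_i` is therefore a `±1` variable with weights proportional to `exp (± θ)`, whose mean is `tanh θ`.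

For the defining property of the conditional expectation, the sum of
`w(x) (x_i - tanh θ(x))` over an event determined by the other spins has to vanish. Flipping the
`i`-th spin is an involution preserving such an event, and the two terms it pairs cancel
(`cubicWeight_pair_cancel`).
-/

open MeasureTheory ProbabilityTheory Real Filter

noncomputable section

/-- The spin value `±1` associated with a Boolean. -/
def spin (b : Bool) : ℝ := if b then 1 else -1

/-- Total magnetization `S_n(x) = ∑ i, x_i`. -/
def totalMag (n : ℕ) (x : Fin n → Bool) : ℝ := ∑ i, spin (x i)

/-- Magnetization per particle `m_n(x) = S_n(x)/n`. -/
def magPP (n : ℕ) (x : Fin n → Bool) : ℝ := totalMag n x / n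

/-- Boltzmann–Gibbs weight of a configuration in the cubic Curie–Weiss model
(the reference factor `2^{-n}` is constant and cancels upon normalization). -/
def cubicWeight (n : ℕ) (K J : ℝ) (x : Fin n → Bool) : ℝ :=
  Real.exp (n * (K / 3 * (magPP n x) ^ 3 + J / 2 * (magPP n x) ^ 2))

/-- The cubic Curie–Weiss Boltzmann–Gibbs probability measure `P_{n,K,J}`. -/
def cubicMeasure (n : ℕ) (K J : ℝ) : Measure (Fin n → Bool) :=
  (∑ x : Fin n → Bool, ENNReal.ofReal (cubicWeight n K J x))⁻¹ •
    ∑ x : Fin n → Bool, ENNReal.ofReal (cubicWeight n K J x) • Measure.dirac x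

/-- The probability of an event under `P_{n,K,J}`, as a real number. -/
def cubicProb (n : ℕ) (K J : ℝ) (s : Set (Fin n → Bool)) : ℝ :=
  (cubicMeasure n K J s).toReal

/-- The magnetization leaving out the `i`-th spin: `m_i(x) = (1/n) ∑_{j ≠ i} x_j`. -/
def magExcept (n : ℕ) (i : Fin n) (x : Fin n → Bool) : ℝ :=
  (∑ j ∈ Finset.univ.erase i, spin (x j)) / n

end

/-- The configuration `x` with its `i`-th spin reversed. -/
def flipAt {n : ℕ} (i : Fin n) (x : Fin n → Bool) : Fin n → Bool :=
  Function.update x i (!x i)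

lemma flipAt_flipAt {n : ℕ} (i : Fin n) (x : Fin n → Bool) : flipAt i (flipAt i x) = x := by
  simp [flipAt]

lemma flipAt_ne {n : ℕ} (i : Fin n) (x : Fin n → Bool) : flipAt i x ≠ x := by
  intro h
  have := congrFun h i
  simp [flipAt] at this

lemma spin_flipAt {n : ℕ} (i : Fin n) (x : Fin n → Bool) :
    spin (flipAt i x i) = -spin (x i) := by
  cases h : x i <;> simp [flipAt, spin, h]

lemma spin_eq_or (b : Bool) : spin b = 1 ∨ spin b = -1 := by
  cases b <;> simp [spin]

lemma magExcept_congr {n : ℕ} (i : Fin n) {x y : Fin n → Bool} (h : ∀ j, j ≠ i → x j = y j) :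
    magExcept n i x = magExcept n i y := by
  unfold magExcept
  congr 1
  refine Finset.sum_congr rfl fun j hj => ?_
  rw [h j (Finset.ne_of_mem_erase hj)]

lemma magExcept_flipAt {n : ℕ} (i : Fin n) (x : Fin n → Bool) :
    magExcept n i (flipAt i x) = magExcept n i x :=
  magExcept_congr i fun j hj => by simp [flipAt, hj]

/-- The effective field `θ` acting on the `i`-th spin. -/
noncomputable def localField (n : ℕ) (K J : ℝ) (i : Fin n) (x : Fin n → Bool) : ℝ :=
  J * magExcept n i x + K * (magExcept n i x) ^ 2 + K / (3 * (n : ℝ) ^ 2)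

/-- Expanding the Hamiltonian in `x_i` and using `x_i² = 1` leaves an affine function of `x_i`
with slope the local field. -/
lemma cubicWeight_eq {n : ℕ} (hn : 1 ≤ n) (K J : ℝ) (i : Fin n) (x : Fin n → Bool) :
    cubicWeight n K J x =
      Real.exp (n * (K / 3 * (magExcept n i x ^ 3 + 3 * magExcept n i x / n ^ 2)
        + J / 2 * (magExcept n i x ^ 2 + 1 / n ^ 2))) *
      Real.exp (spin (x i) * localField n K J i x) := by
  have hn0 : (n : ℝ) ≠ 0 := by positivity
  have hm : magPP n x = magExcept n i x + spin (x i) / n := by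
    unfold magPP magExcept totalMag
    rw [← Finset.sum_erase_add _ _ (Finset.mem_univ i), add_div]
  unfold cubicWeight localField
  rw [← Real.exp_add, hm]
  congr 1
  rcases spin_eq_or (x i) with h | h <;> rw [h] <;> field_simp <;> ring

lemma exp_mul_tanh_cancel (t : ℝ) :
    Real.exp t * (1 - Real.tanh t) + Real.exp (-t) * (-1 - Real.tanh t) = 0 := by
  have hc : Real.exp t + Real.exp (-t) ≠ 0 := by positivity
  rw [Real.tanh_eq]
  field_simp
  ring

/-- Reversing the `i`-th spin reverses the weighted deviation of that spin from `tanh θ`. -/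
lemma cubicWeight_pair_cancel {n : ℕ} (hn : 1 ≤ n) (K J : ℝ) (i : Fin n) (x : Fin n → Bool) :
    cubicWeight n K J x * (spin (x i) - Real.tanh (localField n K J i x)) +
      cubicWeight n K J (flipAt i x) *
        (spin (flipAt i x i) - Real.tanh (localField n K J i (flipAt i x))) = 0 := by
  have hθ : localField n K J i (flipAt i x) = localField n K J i x := by
    simp only [localField, magExcept_flipAt]
  rw [cubicWeight_eq hn K J i x, cubicWeight_eq hn K J i (flipAt i x), hθ, magExcept_flipAt,
    spin_flipAt, mul_assoc, mul_assoc, ← mul_add]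
  refine mul_eq_zero_of_right _ ?_
  have key := exp_mul_tanh_cancel (localField n K J i x)
  rcases spin_eq_or (x i) with h | h <;> rw [h]
  · simpa using key
  · simpa [add_comm] using key

instance cubicMeasure_isFinite (n : ℕ) (K J : ℝ) : IsFiniteMeasure (cubicMeasure n K J) := by
  constructor
  have hZ : (∑ x : Fin n → Bool, ENNReal.ofReal (cubicWeight n K J x)) ≠ 0 := by
    have x₀ : Fin n → Bool := fun _ => true
    intro h
    have h₀ := (Finset.sum_eq_zero_iff.mp h) x₀ (Finset.mem_univ _)
    exact absurd (ENNReal.ofReal_eq_zero.mp h₀) (not_le.mpr (Real.exp_pos _))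
  simp only [cubicMeasure, Measure.smul_apply, Measure.coe_finsetSum, Finset.sum_apply,
    measure_univ, smul_eq_mul, mul_one]
  refine ENNReal.mul_lt_top (ENNReal.inv_lt_top.mpr (pos_iff_ne_zero.mpr hZ)) ?_
  exact ENNReal.sum_lt_top.mpr fun x _ => ENNReal.ofReal_lt_top

lemma integral_cubicMeasure (n : ℕ) (K J : ℝ) (f : (Fin n → Bool) → ℝ) :
    ∫ x, f x ∂(cubicMeasure n K J) =
      ((∑ x : Fin n → Bool, ENNReal.ofReal (cubicWeight n K J x))⁻¹).toReal *
        ∑ x, cubicWeight n K J x * f x := by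
  unfold cubicMeasure
  rw [integral_smul_measure, integral_finsetSum_measure, smul_eq_mul]
  · congr 1
    refine Finset.sum_congr rfl fun x _ => ?_
    rw [integral_smul_measure, integral_dirac, smul_eq_mul,
      ENNReal.toReal_ofReal (show 0 ≤ cubicWeight n K J x from (Real.exp_pos _).le)]
  · intro x _
    have : IsFiniteMeasure (ENNReal.ofReal (cubicWeight n K J x) • Measure.dirac x) :=
      Measure.smul_finite _ ENNReal.ofReal_ne_top
    exact Integrable.of_finite

/-- Single-site conditional expectation in the cubic Curie–Weiss model: the
conditional expectation of the spin `X_i` given the σ-algebra generated by the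
other spins equals `tanh(J m_i(X) + K m_i(X)² + K/(3n²))` a.s. -/
theorem stmt_14 (n : ℕ) (hn : 1 ≤ n) (K J : ℝ) (hK : 0 < K) (i : Fin n) :
    ((cubicMeasure n K J)[fun x => spin (x i) |
        MeasurableSpace.comap (fun (x : Fin n → Bool) (j : {j : Fin n // j ≠ i}) => x j.1)
          MeasurableSpace.pi])
      =ᵐ[cubicMeasure n K J]
      fun x => Real.tanh (J * magExcept n i x + K * (magExcept n i x) ^ 2 +
        K / (3 * (n : ℝ) ^ 2)) := by
  have hm : MeasurableSpace.comap
      (fun (x : Fin n → Bool) (j : {j : Fin n // j ≠ i}) => x j.1) MeasurableSpace.pi ≤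
      (MeasurableSpace.pi : MeasurableSpace (Fin n → Bool)) :=
    Measurable.comap_le (by fun_prop)
  symm
  refine ae_eq_condExp_of_forall_setIntegral_eq hm Integrable.of_finite
    (fun s _ _ => Integrable.integrableOn Integrable.of_finite) ?_ ?_
  · rintro s hs -
    have hs' : MeasurableSet s := hm s hs
    obtain ⟨B, -, rfl⟩ := hs
    rw [← sub_eq_zero, ← integral_sub Integrable.of_finite.integrableOn
      Integrable.of_finite.integrableOn, ← integral_indicator hs', integral_cubicMeasure]
    refine mul_eq_zero_of_right _ ?_
    refine Finset.sum_involution (fun x _ => flipAt i x) ?_ (fun x _ _ => flipAt_ne i x)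
      (fun x _ => Finset.mem_univ _) (fun x _ => flipAt_flipAt i x)
    intro x _
    -- The event sees only the spins other than `i`, so it is invariant under the flip.
    have hmem : (flipAt i x ∈
          (fun (x : Fin n → Bool) (j : {j : Fin n // j ≠ i}) => x j.1) ⁻¹' B) ↔
        x ∈ (fun (x : Fin n → Bool) (j : {j : Fin n // j ≠ i}) => x j.1) ⁻¹' B := by
      have hres : (fun (j : {j : Fin n // j ≠ i}) => flipAt i x j.1) =
          fun (j : {j : Fin n // j ≠ i}) => x j.1 := by
        funext j
        simp [flipAt, j.2]
      rw [Set.mem_preimage, Set.mem_preimage, hres]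
    have key := cubicWeight_pair_cancel hn K J i x
    simp only [localField] at key
    by_cases hx : x ∈ (fun (x : Fin n → Bool) (j : {j : Fin n // j ≠ i}) => x j.1) ⁻¹' B
    · rw [Set.indicator_of_mem hx, Set.indicator_of_mem (hmem.mpr hx)]
      linarith
    · rw [Set.indicator_of_notMem hx, Set.indicator_of_notMem (fun h => hx (hmem.mp h))]
      simp
  -- The candidate factors through the restriction to the spins other than `i`.
  · have hf : Measurable fun y : {j : Fin n // j ≠ i} → Bool =>
        Real.tanh (localField n K J i fun j => if h : j ≠ i then y ⟨j, h⟩ else true) :=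
      measurable_of_finite _
    have hcomp := hf.comp (comap_measurable
      (fun (x : Fin n → Bool) (j : {j : Fin n // j ≠ i}) => x j.1))
    refine StronglyMeasurable.aestronglyMeasurable ?_
    refine Measurable.stronglyMeasurable ?_
    convert hcomp using 2 with x
    have hx : magExcept n i x =
        magExcept n i (fun j => if h : j ≠ i then x j else true) :=
      magExcept_congr i fun j hj => by simp [hj]
    simp only [Function.comp_apply, localField]
    rw [hx]
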